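/- Let L, A, B, C, D be families of abelian groups indexed by pairs (u, q) of integers. Suppose: (i) for every (u, q) there are homomorphisms forming four-term sequences L(u, q+1) → A(u, q) → C(u+1, q+2) → L(u+1, q+1) and L(u, q+1) → B(u, q) → C(u+1, q+2) → L(u+1, q+1), each exact at its two middle terms; (ii) for every (u, q) there are homomorphisms forming four-term sequences L(u−1, q−1) → D(u−1, q−2) → A(u, q) → L(u, q−1) and L(u−1, q−1) → D(u−1, q−2) → B(u, q) → L(u, q−1), each exact at its two middle terms; (iii) L(u, q) = 0 unless u = 0 and q ∈ {−2, 0, 2}. Then for every pair (u, q) with (u, q) ∉ {(0, −1), (0, 1)}, the groups A(u, q) and B(u, q) are isomorphic. -/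

import Mathlib

/-!
An exact sequence `X → Y → Z → W` with `X = W = 0` forces `Y ≅ Z`. Hence `A(u, q)` and `B(u, q)`
are both isomorphic to `C(u + 1, q + 2)`, or both to `D(u - 1, q - 2)`, as soon as the outer terms
of the corresponding diagram vanish. Since `L` lives in homological degree `0`, the outer terms can
be nonzero only for `u ∈ {-1, 0}` in the first diagram and only for `u ∈ {0, 1}` in the second.
So both diagrams can fail only if `u = 0` and `L` is nonzero in both Jones degrees `q - 1`
and `q + 1`.
-/

section Exact

variable {X Y Z W : Type*}

theorem injective_of_exact_of_subsingleton [AddGroup Y] [AddGroup Z] [Subsingleton X]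
    {f : X → Y} {g : Y →+ Z} (hfg : Function.Exact f g) : Function.Injective g := by
  rw [injective_iff_map_eq_zero]
  intro y hy
  obtain ⟨x, rfl⟩ := (hfg y).1 hy
  obtain ⟨x₀, hx₀⟩ := (hfg 0).1 (map_zero g)
  rw [Subsingleton.elim x x₀, hx₀]

theorem surjective_of_exact_of_subsingleton [Zero W] [Subsingleton W]
    {g : Y → Z} {h : Z → W} (hgh : Function.Exact g h) : Function.Surjective g :=
  fun z ↦ (hgh z).1 (Subsingleton.elim _ _)

variable [AddGroup X] [AddGroup Y] [AddGroup Z] [AddGroup W]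

variable (X Y Z W) in
/-- The groups `X`, `Y`, `Z`, `W` are the terms of some sequence of homomorphisms `X → Y → Z → W`
that is exact at `Y` and at `Z`. The maps are only asserted to exist, since the resolution diagrams
enter the argument only through the isomorphism classes of their terms. -/
def FourTermExact : Prop :=
  ∃ (f : X →+ Y) (g : Y →+ Z) (h : Z →+ W), Function.Exact f g ∧ Function.Exact g h

theorem FourTermExact.nonempty_addEquiv [Subsingleton X] [Subsingleton W]
    (hex : FourTermExact X Y Z W) : Nonempty (Y ≃+ Z) := by
  obtain ⟨f, g, h, hfg, hgh⟩ := hex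
  exact ⟨AddEquiv.ofBijective g
    ⟨injective_of_exact_of_subsingleton hfg, surjective_of_exact_of_subsingleton hgh⟩⟩

end Exact

theorem stmt2_general
    {L A B C D : ℤ → ℤ → Type*}
    [∀ u q, AddGroup (L u q)] [∀ u q, AddGroup (A u q)] [∀ u q, AddGroup (B u q)]
    [∀ u q, AddGroup (C u q)] [∀ u q, AddGroup (D u q)]
    (hAC : ∀ u q, FourTermExact (L u (q + 1)) (A u q) (C (u + 1) (q + 2)) (L (u + 1) (q + 1)))
    (hBC : ∀ u q, FourTermExact (L u (q + 1)) (B u q) (C (u + 1) (q + 2)) (L (u + 1) (q + 1)))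
    (hDA : ∀ u q, FourTermExact (L (u - 1) (q - 1)) (D (u - 1) (q - 2)) (A u q) (L u (q - 1)))
    (hDB : ∀ u q, FourTermExact (L (u - 1) (q - 1)) (D (u - 1) (q - 2)) (B u q) (L u (q - 1)))
    {S : Set ℤ} (hL : ∀ u q, ¬(u = 0 ∧ q ∈ S) → Subsingleton (L u q))
    (u q : ℤ) (huq : ¬(u = 0 ∧ q - 1 ∈ S ∧ q + 1 ∈ S)) : Nonempty (A u q ≃+ B u q) := by
  by_cases hu : (u = -1 ∨ u = 0) ∧ q + 1 ∈ S
  · have : Subsingleton (L (u - 1) (q - 1)) := hL _ _ (by lia)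
    have : Subsingleton (L u (q - 1)) := hL _ _ (by tauto)
    obtain ⟨eA⟩ := (hDA u q).nonempty_addEquiv
    obtain ⟨eB⟩ := (hDB u q).nonempty_addEquiv
    exact ⟨eA.symm.trans eB⟩
  · have : Subsingleton (L u (q + 1)) := hL _ _ (by tauto)
    have : Subsingleton (L (u + 1) (q + 1)) := hL _ _ (by grind)
    obtain ⟨eA⟩ := (hAC u q).nonempty_addEquiv
    obtain ⟨eB⟩ := (hBC u q).nonempty_addEquiv
    exact ⟨eA.trans eB.symm⟩

/-- Combining the two abstract diagrams of long exact sequences: if `A` and `B`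
fit into four-term sequences with `C` (resolving one crossing first) and with `D`
(resolving the other crossing first), each exact at its two middle terms, and `L`
vanishes except in bidegrees `(0, -2)`, `(0, 0)`, `(0, 2)`, then
`A(u, q) ≅ B(u, q)` for all `(u, q)` outside `{(0, -1), (0, 1)}`. -/
theorem stmt2
    (L A B C D : ℤ → ℤ → Type)
    [∀ u q, AddCommGroup (L u q)] [∀ u q, AddCommGroup (A u q)]
    [∀ u q, AddCommGroup (B u q)] [∀ u q, AddCommGroup (C u q)]
    [∀ u q, AddCommGroup (D u q)]
    (hAC : ∀ u q : ℤ, ∃ (f : L u (q + 1) →+ A u q) (g : A u q →+ C (u + 1) (q + 2))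
        (h : C (u + 1) (q + 2) →+ L (u + 1) (q + 1)),
        Function.Exact f g ∧ Function.Exact g h)
    (hBC : ∀ u q : ℤ, ∃ (f : L u (q + 1) →+ B u q) (g : B u q →+ C (u + 1) (q + 2))
        (h : C (u + 1) (q + 2) →+ L (u + 1) (q + 1)),
        Function.Exact f g ∧ Function.Exact g h)
    (hDA : ∀ u q : ℤ, ∃ (f : L (u - 1) (q - 1) →+ D (u - 1) (q - 2))
        (g : D (u - 1) (q - 2) →+ A u q) (h : A u q →+ L u (q - 1)),
        Function.Exact f g ∧ Function.Exact g h)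
    (hDB : ∀ u q : ℤ, ∃ (f : L (u - 1) (q - 1) →+ D (u - 1) (q - 2))
        (g : D (u - 1) (q - 2) →+ B u q) (h : B u q →+ L u (q - 1)),
        Function.Exact f g ∧ Function.Exact g h)
    (hL : ∀ u q : ℤ, ¬(u = 0 ∧ (q = -2 ∨ q = 0 ∨ q = 2)) → Subsingleton (L u q)) :
    ∀ u q : ℤ, ¬(u = 0 ∧ (q = -1 ∨ q = 1)) → Nonempty (A u q ≃+ B u q) := by
  intro u q huq
  exact stmt2_general (S := {-2, 0, 2}) hAC hBC hDA hDB hL u q (by grind)
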